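/- rad(M₆₆₆) = rad(D): the set of roots obtained by repeatedly reflecting the 16 roots of the M₆₆₆ diagram in each other equals the set obtained from the 26 roots of the diagram D. Consequently the group R₁ generated by the ω-reflections in the 16 M₆₆₆ roots equals the group R₂ generated by the ω-reflections in the 26 roots of D. -/

import Mathlib

noncomputable section

open ComplexConjugate

namespace Bimonster

/-- The primitive cube root of unity `ω = e^{2πi/3}`. -/
def ω : ℂ := Complex.exp (2 * (Real.pi : ℂ) * Complex.I / 3)

/-- `θ = ω - ω̄ = √-3`. -/
def θ : ℂ := ω - conj ω

/-- `ξ = e^{-πi/6}`. -/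
def ξ : ℂ := Complex.exp (-((Real.pi : ℂ) * Complex.I) / 6)

/-- Membership in the ring of Eisenstein integers `ℰ = ℤ[ω] ⊆ ℂ`. -/
def EisP (z : ℂ) : Prop := ∃ a b : ℤ, z = (a : ℂ) + (b : ℂ) * ω

/-- The units of the ring of Eisenstein integers. -/
def EisUnit (z : ℂ) : Prop :=
  z = 1 ∨ z = -1 ∨ z = ω ∨ z = -ω ∨ z = ω ^ 2 ∨ z = -ω ^ 2

/-- The underlying 14-dimensional complex vector space of `L = 3E₈ ⊕ H`. -/
abbrev V : Type := Fin 14 → ℂ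

/-- The Hermitian form of `L = 3E₈ ⊕ H`: negative definite standard form on the twelve
`E₈`-coordinates, and the hyperbolic cell with Gram matrix `[[0, θ̄], [θ, 0]]` on the
last two coordinates.  It is conjugate-linear in the first variable. -/
def herm (u v : V) : ℂ :=
  -(∑ i : Fin 12, conj (u (Fin.castLE (by norm_num) i)) * v (Fin.castLE (by norm_num) i)) +
    conj (u 12) * conj θ * v 13 + conj (u 13) * θ * v 12

/-- First generator of the ternary tetracode `𝒞₄ ⊆ 𝔽₃⁴`. -/
def tet1 : Fin 4 → ℤ := ![1, 1, -1, 0]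

/-- Second generator of the ternary tetracode `𝒞₄ ⊆ 𝔽₃⁴`. -/
def tet2 : Fin 4 → ℤ := ![0, 1, 1, 1]

/-- The complex `E₈` lattice: vectors of `ℰ⁴` whose reduction mod `θ` lies in the
ternary tetracode. -/
def inE8 (w : Fin 4 → ℂ) : Prop :=
  (∀ i, EisP (w i)) ∧
    ∃ s t : ℤ, ∀ i : Fin 4, ∃ a b : ℤ,
      w i - ((tet1 i * s + tet2 i * t : ℤ) : ℂ) = θ * ((a : ℂ) + (b : ℂ) * ω)

/-- The lattice `L = 3E₈ ⊕ H` as a subset of `ℂ¹⁴`. -/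
def Lset : Set V :=
  {v | (∀ k : Fin 3,
      inE8 fun i : Fin 4 =>
        v ⟨4 * (k : ℕ) + (i : ℕ), by have hk := k.isLt; have hi := i.isLt; omega⟩) ∧
    EisP (v 12) ∧ EisP (v 13)}

/-- A root of `L`: a primitive lattice vector of norm `-3`. -/
def IsRoot (r : V) : Prop :=
  r ∈ Lset ∧ herm r r = -3 ∧
    ∀ α : ℂ, EisP α → ∀ y ∈ Lset, r = α • y → EisUnit α

/-- The `μ`-reflection in a vector `r`: `v ↦ v − (1−μ)·r·⟨r,v⟩/|r|²`. -/
def reflMap (μ : ℂ) (r v : V) : V := v - ((1 - μ) * herm r v / herm r r) • r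

/-- The automorphism group of the lattice `L`: invertible `ℂ`-linear maps preserving
the lattice and the Hermitian form. -/
def AutL : Subgroup (V ≃ₗ[ℂ] V) where
  carrier := {g | (∀ v : V, v ∈ Lset ↔ g v ∈ Lset) ∧ ∀ u v : V, herm (g u) (g v) = herm u v}
  one_mem' := ⟨fun _ => Iff.rfl, fun _ _ => rfl⟩
  mul_mem' := by
    rintro f g ⟨hf1, hf2⟩ ⟨hg1, hg2⟩
    refine ⟨fun v => ?_, fun u v => ?_⟩
    · exact (hg1 v).trans (hf1 (g v))
    · exact (hf2 (g u) (g v)).trans (hg2 u v)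
  inv_mem' := by
    rintro g ⟨hg1, hg2⟩
    refine ⟨fun v => ?_, fun u v => ?_⟩
    · have h := hg1 (g.symm v)
      have hv : g (g.symm v) = v := g.apply_symm_apply v
      rw [hv] at h
      exact h.symm
    · have h := hg2 (g.symm u) (g.symm v)
      have hu : g (g.symm u) = u := g.apply_symm_apply u
      have hv : g (g.symm v) = v := g.apply_symm_apply v
      rw [hu, hv] at h
      exact h.symm

/-- The set of elements of `Aut(L)` acting as the `ω`-reflection in some root
belonging to `S`. -/
def ReflAutos (S : Set V) : Set (V ≃ₗ[ℂ] V) :=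
  {g | g ∈ AutL ∧ ∃ r ∈ S, ∀ v, g v = reflMap ω r v}

/-- The reflection group `R(L)`: the subgroup of `Aut(L)` generated by the
`ω`-reflections in all roots of `L`. -/
def RL : Subgroup (V ≃ₗ[ℂ] V) := Subgroup.closure (ReflAutos {r | IsRoot r})

/-- Two roots are adjacent when `|⟨a,b⟩| = √3`, i.e. when their `ω`-reflections braid. -/
def Adj (a b : V) : Prop := ‖herm a b‖ = Real.sqrt 3

/-- A set of roots is connected if the graph given by adjacency on it is connected. -/
def ConnectedSet (Φ : Set V) : Prop :=
  ∀ a ∈ Φ, ∀ b ∈ Φ, Relation.ReflTransGen (fun x y => x ∈ Φ ∧ y ∈ Φ ∧ Adj x y) a b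

/-- `Rad Φ` is the radical of a set `Φ` of roots: the closure of `Φ` under reflecting
members of the set in each other (and identification of unit multiples). -/
inductive Rad (Φ : Set V) : V → Prop
  | base {r : V} : r ∈ Φ → Rad Φ r
  | refl {a b : V} : Rad Φ a → Rad Φ b → Rad Φ (reflMap ω a b)
  | inv {a b : V} : Rad Φ a → Rad Φ b → Rad Φ (reflMap (conj ω) a b)
  | unit {u : ℂ} {r : V} : EisUnit u → Rad Φ r → Rad Φ (u • r)

/-- Shorthand for the entry `-θω²` occurring in the coordinates of the 26 roots. -/
def qc : ℂ := -(θ * ω ^ 2)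

/- The 26 roots of the diagram `D` in the coordinate system `3E₈ ⊕ H`. -/

def rA : V := ![0, 0, 0, 0, 0, 0, 0, 0, 0, 0, 0, 0, 1, ω ^ 2]
def rC1 : V := ![qc, 0, 0, 0, 0, 0, 0, 0, 0, 0, 0, 0, 0, 0]
def rC2 : V := ![0, 0, 0, 0, qc, 0, 0, 0, 0, 0, 0, 0, 0, 0]
def rC3 : V := ![0, 0, 0, 0, 0, 0, 0, 0, qc, 0, 0, 0, 0, 0]
def rE1 : V := ![0, qc, 0, 0, 0, 0, 0, 0, 0, 0, 0, 0, 0, 0]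
def rE2 : V := ![0, 0, 0, 0, 0, qc, 0, 0, 0, 0, 0, 0, 0, 0]
def rE3 : V := ![0, 0, 0, 0, 0, 0, 0, 0, 0, qc, 0, 0, 0, 0]
def rA1 : V := ![0, 0, 0, 0, 0, 0, 0, qc, 0, 0, 0, qc, ω, ω ^ 2]
def rA2 : V := ![0, 0, 0, qc, 0, 0, 0, 0, 0, 0, 0, qc, ω, ω ^ 2]
def rA3 : V := ![0, 0, 0, qc, 0, 0, 0, qc, 0, 0, 0, 0, ω, ω ^ 2]
def rG1 : V := ![0, 0, 0, qc, 0, 0, -qc, qc, 0, 0, -qc, qc, 2 * ω, 2 * ω ^ 2]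
def rG2 : V := ![0, 0, -qc, qc, 0, 0, 0, qc, 0, 0, -qc, qc, 2 * ω, 2 * ω ^ 2]
def rG3 : V := ![0, 0, -qc, qc, 0, 0, -qc, qc, 0, 0, 0, qc, 2 * ω, 2 * ω ^ 2]
def rF : V := ![0, 1, 1, -2, 0, 1, 1, -2, 0, 1, 1, -2, -2 + ω, -θ]
def rB1 : V := ![1, 0, 1, -1, 0, 0, 0, 0, 0, 0, 0, 0, -1, 0]
def rB2 : V := ![0, 0, 0, 0, 1, 0, 1, -1, 0, 0, 0, 0, -1, 0]
def rB3 : V := ![0, 0, 0, 0, 0, 0, 0, 0, 1, 0, 1, -1, -1, 0]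
def rD1 : V := ![1, 1, -1, 0, 0, 0, 0, 0, 0, 0, 0, 0, 0, 0]
def rD2 : V := ![0, 0, 0, 0, 1, 1, -1, 0, 0, 0, 0, 0, 0, 0]
def rD3 : V := ![0, 0, 0, 0, 0, 0, 0, 0, 1, 1, -1, 0, 0, 0]
def rF1 : V := ![0, 1, 1, 1, 0, 0, 0, 0, 0, 0, 0, 0, 0, 0]
def rF2 : V := ![0, 0, 0, 0, 0, 1, 1, 1, 0, 0, 0, 0, 0, 0]
def rF3 : V := ![0, 0, 0, 0, 0, 0, 0, 0, 0, 1, 1, 1, 0, 0]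
def rZ1 : V := ![0, 1, 1, -2, 1, 0, 1, -1, 1, 0, 1, -1, qc, -θ]
def rZ2 : V := ![1, 0, 1, -1, 0, 1, 1, -2, 1, 0, 1, -1, qc, -θ]
def rZ3 : V := ![1, 0, 1, -1, 1, 0, 1, -1, 0, 1, 1, -2, qc, -θ]

/-- The 13 roots of `D` labelled by the points of `P²(𝔽₃)`. -/
def pt : Fin 13 → V :=
  ![rA, rC1, rC2, rC3, rE1, rE2, rE3, rA1, rA2, rA3, rG1, rG2, rG3]

/-- The 13 roots of `D` labelled by the lines of `P²(𝔽₃)`. -/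
def lnr : Fin 13 → V :=
  ![rF, rB1, rB2, rB3, rD1, rD2, rD3, rF1, rF2, rF3, rZ1, rZ2, rZ3]

/-- The 26 roots of the diagram `D` (the incidence graph of `P²(𝔽₃)`). -/
def D26 : Set V := Set.range pt ∪ Set.range lnr

/-- The 16 roots forming the `M₆₆₆` diagram. -/
def M16 : Set V :=
  Set.range
    (![rA, rB1, rB2, rB3, rC1, rC2, rC3, rD1, rD2, rD3, rE1, rE2, rE3, rF1, rF2, rF3] :
      Fin 16 → V)

/-- The 26 vectors `(ρ₁,…,ρ₂₆) = (x₁,…,x₁₃, ξl₁,…,ξl₁₃)`. -/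
def ρv : Fin 26 → V := fun i =>
  if h : (i : ℕ) < 13 then pt ⟨(i : ℕ), h⟩
  else ξ • lnr ⟨(i : ℕ) - 13, by have := i.isLt; omega⟩

/-- The Weyl vector `ρ̄ = (Σ points + ξ Σ lines)/26`. -/
def ρbar : V := (26 : ℂ)⁻¹ • ((∑ i : Fin 13, pt i) + ξ • ∑ i : Fin 13, lnr i)

/-- The height of a root: `ht(r) = |⟨ρ̄, r⟩| / |ρ̄|²`. -/
def ht (r : V) : ℝ := ‖herm ρbar r‖ / ‖herm ρbar ρbar‖

/-!
If the vectors `v₀, …, v₁₁` are the roots of an induced 12-gon of `D`, listed in cyclic order, then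
reflecting `v₀` successively in `v₁, …, v₁₀` adds a unit multiple of one of them at each step. For
the 12-gons used here the resulting combination of `v₀, …, v₁₀` is a unit multiple of `v₁₁`, so
`v₁₁` lies in the radical of the eleven other roots. Starting from `M₆₆₆` this produces in turn the
roots `aᵢ`, `zᵢ`, `gᵢ` and `f`, hence all of `D`.

Since `φ_{φ_a b} = φ_a φ_b φ_a⁻¹`, the reflection in any vector of the radical of `Φ` lies in the
group generated by the reflections in `Φ`, so equal radicals give equal groups. The lattice enters
only through `L ⊆ θL′`, which ensures that reflections in roots preserve `L`.
-/

section CubeRootOfUnity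

lemma ω_eq : ω = -1 / 2 + (√3 / 2 : ℝ) * Complex.I := by
  have exponent : 2 * (Real.pi : ℂ) * Complex.I / 3 = (Real.pi - Real.pi / 3 : ℝ) * Complex.I := by
    push_cast
    ring
  rw [ω, exponent, Complex.exp_mul_I, ← Complex.ofReal_cos, ← Complex.ofReal_sin,
    Real.cos_pi_sub, Real.sin_pi_sub, Real.cos_pi_div_three, Real.sin_pi_div_three]
  push_cast
  ring

lemma conj_ω : conj ω = -1 - ω := by
  rw [ω_eq]
  simp only [map_add, map_mul, Complex.conj_I, Complex.conj_ofReal, map_div₀, map_neg, map_one,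
    map_ofNat]
  ring

lemma ω_sq : ω ^ 2 = -1 - ω := by
  have sqrt_three_sq : ((√3 : ℝ) : ℂ) ^ 2 = 3 := by
    rw [← Complex.ofReal_pow, Real.sq_sqrt (by norm_num)]
    norm_num
  rw [ω_eq]
  push_cast
  linear_combination (Complex.I ^ 2 / 4) * sqrt_three_sq + (3 / 4 : ℂ) * Complex.I_sq

lemma θ_eq : θ = 1 + 2 * ω := by
  rw [θ, conj_ω]
  ring

lemma conj_ω_mul_ω : conj ω * ω = 1 := by
  rw [conj_ω]
  linear_combination -ω_sq

lemma EisUnit.ne_zero {u : ℂ} (hu : EisUnit u) : u ≠ 0 := by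
  have ω_ne_zero : ω ≠ 0 := right_ne_zero_of_mul (conj_ω_mul_ω ▸ one_ne_zero)
  rcases hu with rfl | rfl | rfl | rfl | rfl | rfl <;> simp [ω_ne_zero]

lemma eisUnit_of_pow_six_eq_one {u : ℂ} (hu : u ^ 6 = 1) : EisUnit u := by
  have factorization :
      (u - 1) * ((u + 1) * ((u - ω) * ((u + ω) * ((u - ω ^ 2) * (u + ω ^ 2))))) = 0 := by
    linear_combination hu +
      ((u ^ 2 * ω ^ 2 - u ^ 4) * (ω ^ 2 - ω + 1) - (ω - 1) * (ω ^ 3 + 1)) * ω_sq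
  simpa only [EisUnit, mul_eq_zero, sub_eq_zero, add_eq_zero_iff_eq_neg] using factorization

end CubeRootOfUnity

section HermitianForm

/-- The form `herm` bundled as a sesquilinear map, conjugate-linear in the first variable. -/
def hermForm : V →ₗ⋆[ℂ] V →ₗ[ℂ] ℂ :=
  LinearMap.mk₂'ₛₗ (starRingEnd ℂ) (RingHom.id ℂ) herm
    (fun u u' v => by
      simp only [herm, Pi.add_apply, map_add, add_mul, Finset.sum_add_distrib]
      ring)
    (fun c u v => by
      simp only [herm, Pi.smul_apply, smul_eq_mul, map_mul, mul_assoc, ← Finset.mul_sum]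
      ring)
    (fun u v v' => by
      simp only [herm, Pi.add_apply, mul_add, Finset.sum_add_distrib]
      ring)
    (fun c u v => by
      simp only [herm, Pi.smul_apply, smul_eq_mul, RingHom.id_apply, mul_left_comm _ c,
        ← Finset.mul_sum]
      ring)

lemma hermForm_apply (u v : V) : hermForm u v = herm u v := rfl

lemma herm_smul_right (c : ℂ) (u v : V) : herm u (c • v) = c * herm u v :=
  (hermForm u).map_smul c v

lemma herm_smul_left (c : ℂ) (u v : V) : herm (c • u) v = conj c * herm u v :=
  hermForm.map_smulₛₗ₂ c u v

lemma herm_sub_right (u v w : V) : herm u (v - w) = herm u v - herm u w :=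
  (hermForm u).map_sub v w

lemma herm_sub_left (u v w : V) : herm (u - v) w = herm u w - herm v w :=
  hermForm.map_sub₂ u v w

lemma conj_herm (u v : V) : conj (herm u v) = herm v u := by
  simp only [herm, map_add, map_neg, map_sum, map_mul, Complex.conj_conj, mul_comm (conj (v _))]
  ring

end HermitianForm

section Reflections

lemma reflMap_one (r v : V) : reflMap 1 r v = v := by
  simp [reflMap]

-- For isotropic `r` division by zero makes `reflMap μ r` the identity, so no case is excluded here.
lemma reflMap_reflMap (μ ν : ℂ) (r v : V) :
    reflMap μ r (reflMap ν r v) = reflMap (μ * ν) r v := by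
  by_cases isotropic : herm r r = 0
  · simp [reflMap, isotropic]
  · simp only [reflMap, herm_sub_right, herm_smul_right, sub_sub, ← add_smul]
    congr 2
    field_simp
    ring

lemma herm_reflMap {μ : ℂ} (hμ : conj μ * μ = 1) (r u v : V) :
    herm (reflMap μ r u) (reflMap μ r v) = herm u v := by
  by_cases isotropic : herm r r = 0
  · simp [reflMap, isotropic]
  · simp only [reflMap, herm_sub_left, herm_sub_right, herm_smul_left, herm_smul_right,
      map_div₀, map_mul, map_sub, map_one, conj_herm]
    field_simp
    linear_combination herm u r * herm r v * hμ

lemma reflMap_smul_root {c : ℂ} (hc : c ≠ 0) (μ : ℂ) (r v : V) :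
    reflMap μ (c • r) v = reflMap μ r v := by
  have hc' : conj c ≠ 0 := (map_ne_zero _).2 hc
  by_cases isotropic : herm r r = 0
  · simp [reflMap, herm_smul_left, herm_smul_right, isotropic]
  · simp only [reflMap, herm_smul_left, herm_smul_right, smul_smul]
    congr 2
    field_simp

lemma map_reflMap {g : V ≃ₗ[ℂ] V} (hg : ∀ u v, herm (g u) (g v) = herm u v) (μ : ℂ) (r v : V) :
    g (reflMap μ r v) = reflMap μ (g r) (g v) := by
  simp only [reflMap, map_sub, map_smul, hg]

/-- The `ω`-reflection `φ_r` as a linear automorphism of `V`. -/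
def reflEquiv (r : V) : V ≃ₗ[ℂ] V where
  toFun := reflMap ω r
  invFun := reflMap (conj ω) r
  map_add' u v := by
    simp only [reflMap, ← hermForm_apply, map_add, mul_add, add_div, add_smul]
    abel
  map_smul' c v := by
    simp only [reflMap, herm_smul_right, RingHom.id_apply, smul_sub, smul_smul]
    congr 2
    ring
  left_inv v := by rw [reflMap_reflMap, conj_ω_mul_ω, reflMap_one]
  right_inv v := by rw [reflMap_reflMap, mul_comm, conj_ω_mul_ω, reflMap_one]

lemma reflEquiv_apply (r v : V) : reflEquiv r v = reflMap ω r v := rfl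

lemma reflEquiv_inv_apply (r v : V) : (reflEquiv r)⁻¹ v = reflMap (conj ω) r v := rfl

lemma reflEquiv_smul {c : ℂ} (hc : c ≠ 0) (r : V) : reflEquiv (c • r) = reflEquiv r :=
  LinearEquiv.ext (reflMap_smul_root hc ω r)

lemma reflEquiv_map {g : V ≃ₗ[ℂ] V} (hg : ∀ u v, herm (g u) (g v) = herm u v) (r : V) :
    reflEquiv (g r) = g * reflEquiv r * g⁻¹ := by
  refine eq_mul_inv_of_mul_eq (LinearEquiv.ext fun v => ?_)
  exact (map_reflMap hg ω r v).symm

lemma herm_reflEquiv (r u v : V) : herm (reflEquiv r u) (reflEquiv r v) = herm u v :=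
  herm_reflMap conj_ω_mul_ω r u v

lemma herm_reflEquiv_inv (r u v : V) :
    herm ((reflEquiv r)⁻¹ u) ((reflEquiv r)⁻¹ v) = herm u v :=
  herm_reflMap (by rw [Complex.conj_conj, mul_comm, conj_ω_mul_ω]) r u v

end Reflections

section Radical

variable {Φ Ψ : Set V}

lemma Rad.of_forall_mem (hΦ : ∀ r ∈ Φ, Rad Ψ r) {v : V} (hv : Rad Φ v) : Rad Ψ v := by
  induction hv with
  | base hr => exact hΦ _ hr
  | refl _ _ ha hb => exact .refl ha hb
  | inv _ _ ha hb => exact .inv ha hb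
  | unit hu _ hr => exact .unit hu hr

lemma ReflAutos_mono (h : Φ ⊆ Ψ) : ReflAutos Φ ⊆ ReflAutos Ψ :=
  fun _ ⟨hg, r, hr, hgr⟩ => ⟨hg, r, h hr, hgr⟩

lemma Rad.reflEquiv_mem_closure (hΦ : ∀ r ∈ Φ, reflEquiv r ∈ AutL) {v : V} (hv : Rad Φ v) :
    reflEquiv v ∈ Subgroup.closure (ReflAutos Φ) := by
  induction hv with
  | base hr => exact Subgroup.subset_closure ⟨hΦ _ hr, _, hr, fun _ => rfl⟩
  | @refl a b _ _ ha hb =>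
    rw [← reflEquiv_apply, reflEquiv_map (herm_reflEquiv a)]
    exact mul_mem (mul_mem ha hb) (inv_mem ha)
  | @inv a b _ _ ha hb =>
    rw [← reflEquiv_inv_apply, reflEquiv_map (herm_reflEquiv_inv a)]
    exact mul_mem (mul_mem (inv_mem ha) hb) (inv_mem (inv_mem ha))
  | unit hu _ hr => rwa [reflEquiv_smul hu.ne_zero]

lemma closure_ReflAutos_le (hΦ : ∀ r ∈ Φ, reflEquiv r ∈ AutL) (hΨ : ∀ r ∈ Ψ, Rad Φ r) :
    Subgroup.closure (ReflAutos Ψ) ≤ Subgroup.closure (ReflAutos Φ) := by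
  rw [Subgroup.closure_le]
  rintro g ⟨-, r, hr, hgr⟩
  obtain rfl : g = reflEquiv r := LinearEquiv.ext hgr
  exact (hΨ r hr).reflEquiv_mem_closure hΦ

/-- Reflecting the first vector of a path successively in the following ones adds a multiple of
each of them. -/
lemma Rad.sum_partialProd_smul {n : ℕ} {v : Fin (n + 1) → V} {e : Fin n → ℂ}
    (hv : ∀ k, Rad Φ (v k)) (norm : ∀ k, herm (v k) (v k) = -3)
    (adjacent : ∀ k : Fin n, (1 - ω) * herm (v k.succ) (v k.castSucc) = 3 * e k)
    (orthogonal : ∀ j k : Fin (n + 1), (j : ℕ) + 1 < k → herm (v k) (v j) = 0) :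
    Rad Φ (∑ k, Fin.partialProd e k • v k) := by
  induction n with
  | zero => simpa using hv 0
  | succ n ih =>
    have shorter : Rad Φ (∑ k : Fin (n + 1), Fin.partialProd e k.castSucc • v k.castSucc) := by
      have path := ih (v := v ∘ Fin.castSucc) (e := Fin.init e) (fun k => hv k.castSucc)
        (fun k => norm k.castSucc) (fun k => adjacent k.castSucc)
        (fun j k => orthogonal j.castSucc k.castSucc)
      simpa only [Fin.partialProd_init, Function.comp_apply] using path
    have last_herm : (1 - ω) * herm (v (Fin.last (n + 1)))
        (∑ k : Fin (n + 1), Fin.partialProd e k.castSucc • v k.castSucc) =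
        3 * Fin.partialProd e (Fin.last (n + 1)) := by
      have earlier_orthogonal (k : Fin n) :
          herm (v (Fin.last (n + 1))) (v k.castSucc.castSucc) = 0 :=
        orthogonal _ _ (by simp)
      have last_adjacent := adjacent (Fin.last n)
      rw [Fin.succ_last] at last_adjacent
      rw [← hermForm_apply, map_sum, Fin.sum_univ_castSucc, Finset.sum_eq_zero, ← Fin.succ_last,
        Fin.partialProd_succ]
      · simp only [map_smul, hermForm_apply, smul_eq_mul, zero_add, Fin.succ_last]
        linear_combination Fin.partialProd e (Fin.last n).castSucc * last_adjacent
      · simp [hermForm_apply, earlier_orthogonal]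
    have reflected := (hv (Fin.last (n + 1))).refl shorter
    rw [reflMap, norm, last_herm] at reflected
    rw [Fin.sum_univ_castSucc]
    convert reflected using 1
    rw [sub_eq_add_neg, ← neg_smul]
    congr 2
    ring

end Radical

section EisensteinIntegers

/-- The ring `ℰ = ℤ[ω]` as an abstract quadratic algebra with `ω² = -1 - ω`. Unlike its image in
`ℂ` it has decidable equality, which turns identities between explicit vectors into computations. -/
abbrev Eis : Type := QuadraticAlgebra ℤ (-1) (-1)

namespace Eis

/-- The cube root of unity in the abstract ring `ℰ`. -/
def ω : Eis := ⟨0, 1⟩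

/-- The element `θ = ω - ω̄` of the abstract ring `ℰ`. -/
def θ : Eis := ω - star ω

/-- The inclusion `ℰ ⊆ ℂ`. -/
def toComplex : Eis →ₐ[ℤ] ℂ :=
  QuadraticAlgebra.lift ⟨Bimonster.ω, by rw [← sq, ω_sq]; simp [sub_eq_add_neg]⟩

lemma toComplex_apply (z : Eis) : toComplex z = z.re + z.im * Bimonster.ω := by
  simp [toComplex]

lemma toComplex_star (z : Eis) : toComplex (star z) = conj (toComplex z) := by
  simp only [toComplex_apply, QuadraticAlgebra.re_star, QuadraticAlgebra.im_star, map_add, map_mul,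
    map_intCast, conj_ω]
  push_cast
  ring

lemma toComplex_ω : toComplex ω = Bimonster.ω := by
  simp [toComplex_apply, ω]

lemma toComplex_θ : toComplex θ = Bimonster.θ := by
  rw [θ, map_sub, toComplex_star, toComplex_ω, Bimonster.θ]

lemma eisP_iff {z : ℂ} : EisP z ↔ ∃ x : Eis, toComplex x = z := by
  constructor
  · rintro ⟨a, b, rfl⟩
    exact ⟨⟨a, b⟩, toComplex_apply _⟩
  · rintro ⟨x, rfl⟩
    exact ⟨x.re, x.im, toComplex_apply x⟩

/-- Reduction modulo `θ`, which sends `ω` to `1`. -/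
def red : Eis →ₐ[ℤ] ZMod 3 :=
  QuadraticAlgebra.lift ⟨1, by decide⟩

lemma red_apply (z : Eis) : red z = z.re + z.im := by
  simp [red]

lemma red_star (z : Eis) : red (star z) = red z := by
  have three_eq_zero : (3 : ZMod 3) = 0 := rfl
  simp only [red_apply, QuadraticAlgebra.re_star, QuadraticAlgebra.im_star]
  push_cast
  linear_combination -(z.im : ZMod 3) * three_eq_zero

lemma red_θ : red θ = 0 := by
  rw [θ, map_sub, red_star, sub_self]

lemma red_eq_zero_iff {z : Eis} : red z = 0 ↔ θ ∣ z := by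
  constructor
  · intro hz
    rw [red_apply, ← Int.cast_add, ZMod.intCast_zmod_eq_zero_iff_dvd] at hz
    obtain ⟨m, hm⟩ := hz
    refine ⟨⟨2 * m - z.re, m - z.re⟩, ?_⟩
    ext <;> simp [θ, ω] <;> omega
  · rintro ⟨w, rfl⟩
    rw [map_mul, red_θ, zero_mul]

/-- The entry `qc = -θω²` in the abstract ring `ℰ`. -/
def qc : Eis := -(θ * ω ^ 2)

lemma toComplex_qc : toComplex qc = Bimonster.qc := by
  rw [qc, Bimonster.qc, map_neg, map_mul, map_pow, toComplex_θ, toComplex_ω]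

end Eis

end EisensteinIntegers

section Lattice

/-- The `k`-th of the three `E₈`-blocks of coordinates of a vector of length 14. -/
def block {R : Type*} (x : Fin 14 → R) (k : Fin 3) (i : Fin 4) : R :=
  x ⟨4 * k + i, by omega⟩

/-- The vector of length 14 with the given `E₈`-blocks and the given two coordinates in the
hyperbolic cell. -/
def ofBlocks {R : Type*} (x : Fin 3 → Fin 4 → R) (s t : R) : Fin 14 → R :=
  ![x 0 0, x 0 1, x 0 2, x 0 3, x 1 0, x 1 1, x 1 2, x 1 3, x 2 0, x 2 1, x 2 2, x 2 3, s, t]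

lemma block_ofBlocks {R : Type*} (x : Fin 3 → Fin 4 → R) (s t : R) :
    block (ofBlocks x s t) = x := by
  funext k i
  fin_cases k <;> fin_cases i <;> rfl

lemma ofBlocks_block {R : Type*} (x : Fin 14 → R) : ofBlocks (block x) (x 12) (x 13) = x := by
  funext n
  fin_cases n <;> rfl

lemma comp_ofBlocks {R S : Type*} (f : R → S) (x : Fin 3 → Fin 4 → R) (s t : R) :
    f ∘ ofBlocks x s t = ofBlocks (fun k => f ∘ x k) (f s) (f t) := by
  funext n
  fin_cases n <;> rfl

/-- The ternary tetracode `𝒞₄ ⊆ 𝔽₃⁴`. -/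
def tetracode : Submodule (ZMod 3) (Fin 4 → ZMod 3) :=
  Submodule.span (ZMod 3) {fun i => (tet1 i : ZMod 3), fun i => (tet2 i : ZMod 3)}

lemma mem_tetracode {w : Fin 4 → ZMod 3} :
    w ∈ tetracode ↔ ∃ s t : ZMod 3, ∀ i, w i = s * tet1 i + t * tet2 i := by
  simp only [tetracode, Submodule.mem_span_pair, funext_iff, Pi.add_apply, Pi.smul_apply,
    smul_eq_mul, eq_comm]

lemma dotProduct_eq_zero_of_mem_tetracode {v w : Fin 4 → ZMod 3} (hv : v ∈ tetracode)
    (hw : w ∈ tetracode) : v ⬝ᵥ w = 0 := by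
  simp only [mem_tetracode, ← funext_iff] at hv hw
  obtain ⟨s, t, rfl⟩ := hv
  obtain ⟨s', t', rfl⟩ := hw
  revert s t s' t'
  decide

lemma inE8_iff {w : Fin 4 → ℂ} :
    inE8 w ↔ ∃ x : Fin 4 → Eis, Eis.toComplex ∘ x = w ∧ Eis.red ∘ x ∈ tetracode := by
  constructor
  · rintro ⟨-, s, t, hw⟩
    choose a b hab using hw
    refine ⟨fun i => (tet1 i * s + tet2 i * t : ℤ) + Eis.θ * ⟨a i, b i⟩, funext fun i => ?_,
      mem_tetracode.2 ⟨s, t, fun i => ?_⟩⟩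
    · simp only [Function.comp_apply, map_add, map_mul, map_intCast, Eis.toComplex_θ,
        Eis.toComplex_apply ⟨a i, b i⟩, ← hab, add_sub_cancel]
    · simp [Eis.red_θ, mul_comm]
  · rintro ⟨x, rfl, hx⟩
    obtain ⟨s, t, hst⟩ := mem_tetracode.1 hx
    obtain ⟨s, rfl⟩ := ZMod.intCast_surjective s
    obtain ⟨t, rfl⟩ := ZMod.intCast_surjective t
    refine ⟨fun i => Eis.eisP_iff.2 ⟨x i, rfl⟩, s, t, fun i => ?_⟩
    obtain ⟨y, hy⟩ : Eis.θ ∣ x i - (tet1 i * s + tet2 i * t : ℤ) := by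
      rw [← Eis.red_eq_zero_iff, map_sub, map_intCast, sub_eq_zero]
      exact (hst i).trans (by push_cast; ring)
    exact ⟨y.re, y.im, by
      rw [← Eis.toComplex_apply, ← Eis.toComplex_θ, ← map_mul, ← hy, map_sub, map_intCast]; rfl⟩

/-- The lattice `L = 3E₈ ⊕ H` as a submodule of `ℰ¹⁴`. -/
def lattice : Submodule Eis (Fin 14 → Eis) where
  carrier := {x | ∀ k, Eis.red ∘ block x k ∈ tetracode}
  zero_mem' k := by
    convert tetracode.zero_mem
    funext _
    exact map_zero Eis.red
  add_mem' hx hy k := by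
    convert tetracode.add_mem (hx k) (hy k)
    funext i
    exact map_add Eis.red _ _
  smul_mem' c x hx k := by
    convert tetracode.smul_mem (Eis.red c) (hx k)
    funext i
    exact map_mul Eis.red _ _

lemma mem_lattice {x : Fin 14 → Eis} : x ∈ lattice ↔ ∀ k, Eis.red ∘ block x k ∈ tetracode :=
  Iff.rfl

lemma mem_Lset_iff {v : V} : v ∈ Lset ↔ ∃ x ∈ lattice, Eis.toComplex ∘ x = v := by
  constructor
  · rintro ⟨blocks, h12, h13⟩
    choose x hxv hx using fun k => inE8_iff.1 (blocks k)
    obtain ⟨s, hs⟩ := Eis.eisP_iff.1 h12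
    obtain ⟨t, ht⟩ := Eis.eisP_iff.1 h13
    refine ⟨ofBlocks x s t, by rwa [mem_lattice, block_ofBlocks], ?_⟩
    rw [comp_ofBlocks, hs, ht, funext hxv]
    exact ofBlocks_block v
  · rintro ⟨x, hx, rfl⟩
    exact ⟨fun k => inE8_iff.2 ⟨block x k, rfl, hx k⟩, Eis.eisP_iff.2 ⟨x 12, rfl⟩,
      Eis.eisP_iff.2 ⟨x 13, rfl⟩⟩

/-- The Hermitian form of `L` with values in the abstract ring `ℰ`. -/
def Eis.herm (x y : Fin 14 → Eis) : Eis :=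
  -∑ k, ∑ i, star (block x k i) * block y k i + star (x 12) * star θ * y 13 +
    star (x 13) * θ * y 12

lemma sum_castLE_eq_sum_block {R : Type*} [AddCommMonoid R] (f : Fin 14 → R) :
    ∑ i : Fin 12, f (Fin.castLE (by norm_num) i) = ∑ k, ∑ i, block f k i := by
  rw [← (finProdFinEquiv (m := 3) (n := 4)).sum_comp, Fintype.sum_prod_type]
  refine Fintype.sum_congr _ _ fun k => Fintype.sum_congr _ _ fun i => congrArg f (Fin.ext ?_)
  exact add_comm _ _

lemma herm_toComplex (x y : Fin 14 → Eis) :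
    herm (Eis.toComplex ∘ x) (Eis.toComplex ∘ y) = Eis.toComplex (Eis.herm x y) := by
  have split_sum :=
    sum_castLE_eq_sum_block fun n => conj (Eis.toComplex (x n)) * Eis.toComplex (y n)
  simp only [herm, Function.comp_apply, split_sum]
  simp only [Eis.herm, map_add, map_neg, map_sum, map_mul, Eis.toComplex_star, Eis.toComplex_θ]
  rfl

/-- This is `L ⊆ θL′`. -/
lemma θ_dvd_herm {x y : Fin 14 → Eis} (hx : x ∈ lattice) (hy : y ∈ lattice) :
    Eis.θ ∣ Eis.herm x y := by
  have blocks_orthogonal (k : Fin 3) : ∑ i, Eis.red (block x k i) * Eis.red (block y k i) = 0 :=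
    dotProduct_eq_zero_of_mem_tetracode (hx k) (hy k)
  rw [← Eis.red_eq_zero_iff]
  simp [Eis.herm, Eis.red_star, Eis.red_θ, blocks_orthogonal]

lemma reflMap_toComplex_mem_Lset {m : Eis} (hm : Eis.θ ∣ 1 - m) {r v : V} (hr : r ∈ Lset)
    (norm : herm r r = -3) (hv : v ∈ Lset) : reflMap (Eis.toComplex m) r v ∈ Lset := by
  obtain ⟨x, hx, rfl⟩ := mem_Lset_iff.1 hr
  obtain ⟨y, hy, rfl⟩ := mem_Lset_iff.1 hv
  obtain ⟨n, hn⟩ := hm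
  obtain ⟨k, hk⟩ := θ_dvd_herm hx hy
  have coefficient : (1 - Eis.toComplex m) * Eis.toComplex (Eis.herm x y) / -3 =
      Eis.toComplex (n * k) := by
    have hm : 1 - Eis.toComplex m = θ * Eis.toComplex n := by
      rw [← Eis.toComplex_θ, ← map_mul, ← hn, map_sub, map_one]
    rw [hm, hk, map_mul, map_mul, Eis.toComplex_θ, θ_eq]
    linear_combination (-4 / 3 * Eis.toComplex n * Eis.toComplex k) * ω_sq
  refine mem_Lset_iff.2 ⟨y - (n * k) • x, sub_mem hy (lattice.smul_mem _ hx), ?_⟩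
  rw [reflMap, norm, herm_toComplex, coefficient]
  funext i
  simp

lemma reflEquiv_mem_AutL {r : V} (hr : r ∈ Lset) (norm : herm r r = -3) : reflEquiv r ∈ AutL := by
  have θ_dvd_one_sub_ω : Eis.θ ∣ 1 - Eis.ω := Eis.red_eq_zero_iff.1 (by decide)
  have θ_dvd_one_sub_star_ω : Eis.θ ∣ 1 - star Eis.ω := Eis.red_eq_zero_iff.1 (by decide)
  refine ⟨fun v => ⟨fun hv => ?_, fun hv => ?_⟩, herm_reflEquiv r⟩
  · have := reflMap_toComplex_mem_Lset θ_dvd_one_sub_ω hr norm hv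
    rwa [Eis.toComplex_ω] at this
  · have := reflMap_toComplex_mem_Lset θ_dvd_one_sub_star_ω hr norm hv
    rwa [Eis.toComplex_star, Eis.toComplex_ω, ← reflEquiv_inv_apply, LinearEquiv.coe_inv,
      LinearEquiv.symm_apply_apply] at this

end Lattice

section Diagram

/-- The vertices of the diagram `D`, named as in the paper, with the indices `1, 2, 3` shifted to
`0, 1, 2`. -/
inductive Vertex
  | a
  | f
  | aᵢ (i : Fin 3)
  | bᵢ (i : Fin 3)
  | cᵢ (i : Fin 3)
  | dᵢ (i : Fin 3)
  | eᵢ (i : Fin 3)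
  | fᵢ (i : Fin 3)
  | gᵢ (i : Fin 3)
  | zᵢ (i : Fin 3)
  deriving DecidableEq, Fintype

namespace Vertex

/-- Incidence of a point (`a`, `aᵢ`, `cᵢ`, `eᵢ`, `gᵢ`) with a line (`f`, `bᵢ`, `dᵢ`, `fᵢ`, `zᵢ`) of
`P²(𝔽₃)`. It is `false` on all other pairs of vertices. -/
def liesOn : Vertex → Vertex → Bool
  | a, f | a, bᵢ _ | eᵢ _, f => true
  | aᵢ i, bᵢ j | aᵢ i, zᵢ j => i = j
  | aᵢ i, fᵢ j => i ≠ j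
  | cᵢ i, bᵢ j | cᵢ i, dᵢ j => i = j
  | cᵢ i, zᵢ j => i ≠ j
  | eᵢ i, dᵢ j | eᵢ i, fᵢ j | eᵢ i, zᵢ j => i = j
  | gᵢ i, bᵢ j | gᵢ i, fᵢ j => i = j
  | gᵢ i, dᵢ j => i ≠ j
  | _, _ => false

/-- The vertices of the subdiagram `M₆₆₆`. -/
def M666 : Finset Vertex :=
  insert a (Finset.univ.biUnion fun i => {bᵢ i, cᵢ i, dᵢ i, eᵢ i, fᵢ i})

lemma mem_M666 {x : Vertex} :
    x ∈ M666 ↔ x = a ∨ ∃ i, x = bᵢ i ∨ x = cᵢ i ∨ x = dᵢ i ∨ x = eᵢ i ∨ x = fᵢ i := by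
  simp [M666]

/-- Adjacency in the diagram `D`, the incidence graph of `P²(𝔽₃)`. -/
def adj (x y : Vertex) : Bool :=
  liesOn x y || liesOn y x

/-- The coordinates in `3E₈ ⊕ H` of the root labelled by a vertex. -/
def coords : Vertex → Fin 14 → Eis
  | a => ofBlocks 0 1 (Eis.ω ^ 2)
  | f => ofBlocks (fun _ => ![0, 1, 1, -2]) (-2 + Eis.ω) (-Eis.θ)
  | aᵢ i => ofBlocks (Function.update (fun _ => ![0, 0, 0, Eis.qc]) i 0) Eis.ω (Eis.ω ^ 2)
  | bᵢ i => ofBlocks (Pi.single i ![1, 0, 1, -1]) (-1) 0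
  | cᵢ i => ofBlocks (Pi.single i ![Eis.qc, 0, 0, 0]) 0 0
  | dᵢ i => ofBlocks (Pi.single i ![1, 1, -1, 0]) 0 0
  | eᵢ i => ofBlocks (Pi.single i ![0, Eis.qc, 0, 0]) 0 0
  | fᵢ i => ofBlocks (Pi.single i ![0, 1, 1, 1]) 0 0
  | gᵢ i => ofBlocks (Function.update (fun _ => ![0, 0, -Eis.qc, Eis.qc]) i ![0, 0, 0, Eis.qc])
      (2 * Eis.ω) (2 * Eis.ω ^ 2)
  | zᵢ i => ofBlocks (Function.update (fun _ => ![1, 0, 1, -1]) i ![0, 1, 1, -2]) Eis.qc (-Eis.θ)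

/-- The root of `L` labelled by a vertex of `D`. -/
def root (x : Vertex) : V := Eis.toComplex ∘ coords x

/-- The coefficient `u` in `φ_x(y) = y + u x` for adjacent vertices `y` and `x`: it is `1` when `x`
is a point and `-ω` when `x` is a line. -/
def step : Vertex → Eis
  | a | aᵢ _ | cᵢ _ | eᵢ _ | gᵢ _ => 1
  | f | bᵢ _ | dᵢ _ | fᵢ _ | zᵢ _ => -Eis.ω

lemma step_pow_six (x : Vertex) : step x ^ 6 = 1 := by
  revert x
  decide +kernel

lemma herm_coords_self (x : Vertex) : Eis.herm (coords x) (coords x) = -3 := by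
  revert x
  decide +kernel

lemma herm_coords_of_adj {x y : Vertex} (h : adj x y) :
    (1 - Eis.ω) * Eis.herm (coords x) (coords y) = 3 * step x := by
  revert x y
  decide +kernel

lemma herm_coords_of_not_adj {x y : Vertex} (hne : x ≠ y) (h : ¬adj x y) :
    Eis.herm (coords x) (coords y) = 0 := by
  revert x y
  decide +kernel

lemma coords_mem_lattice (x : Vertex) : coords x ∈ lattice := by
  simp only [mem_lattice, mem_tetracode]
  revert x
  decide +kernel

lemma herm_root_self (x : Vertex) : herm (root x) (root x) = -3 := by
  rw [root, herm_toComplex, herm_coords_self, map_neg, map_ofNat]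

lemma herm_root_of_adj {x y : Vertex} (h : adj x y) :
    (1 - ω) * herm (root x) (root y) = 3 * Eis.toComplex (step x) := by
  rw [root, root, herm_toComplex, ← Eis.toComplex_ω, ← map_one Eis.toComplex, ← map_sub, ← map_mul,
    herm_coords_of_adj h, map_mul, map_ofNat]

lemma herm_root_of_not_adj {x y : Vertex} (hne : x ≠ y) (h : ¬adj x y) :
    herm (root x) (root y) = 0 := by
  rw [root, root, herm_toComplex, herm_coords_of_not_adj hne h, map_zero]

lemma reflEquiv_root_mem_AutL (x : Vertex) : reflEquiv (root x) ∈ AutL :=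
  reflEquiv_mem_AutL (mem_Lset_iff.2 ⟨coords x, coords_mem_lattice x, rfl⟩) (herm_root_self x)

end Vertex

open Vertex

lemma root_a : root a = rA := by
  rw [root, coords, comp_ofBlocks]
  simp [ofBlocks, rA, Eis.toComplex_ω]

lemma root_f : root f = rF := by
  rw [root, coords, comp_ofBlocks]
  simp [ofBlocks, rF, map_ofNat, Eis.toComplex_ω, Eis.toComplex_θ]

lemma root_aᵢ (i : Fin 3) : root (aᵢ i) = ![rA1, rA2, rA3] i := by
  rw [root, coords, comp_ofBlocks]
  fin_cases i <;> simp [ofBlocks, rA1, rA2, rA3, Eis.toComplex_ω, Eis.toComplex_qc]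

lemma root_bᵢ (i : Fin 3) : root (bᵢ i) = ![rB1, rB2, rB3] i := by
  rw [root, coords, comp_ofBlocks]
  fin_cases i <;> simp [ofBlocks, rB1, rB2, rB3]

lemma root_cᵢ (i : Fin 3) : root (cᵢ i) = ![rC1, rC2, rC3] i := by
  rw [root, coords, comp_ofBlocks]
  fin_cases i <;> simp [ofBlocks, rC1, rC2, rC3, Eis.toComplex_qc]

lemma root_dᵢ (i : Fin 3) : root (dᵢ i) = ![rD1, rD2, rD3] i := by
  rw [root, coords, comp_ofBlocks]
  fin_cases i <;> simp [ofBlocks, rD1, rD2, rD3]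

lemma root_eᵢ (i : Fin 3) : root (eᵢ i) = ![rE1, rE2, rE3] i := by
  rw [root, coords, comp_ofBlocks]
  fin_cases i <;> simp [ofBlocks, rE1, rE2, rE3, Eis.toComplex_qc]

lemma root_fᵢ (i : Fin 3) : root (fᵢ i) = ![rF1, rF2, rF3] i := by
  rw [root, coords, comp_ofBlocks]
  fin_cases i <;> simp [ofBlocks, rF1, rF2, rF3]

lemma root_gᵢ (i : Fin 3) : root (gᵢ i) = ![rG1, rG2, rG3] i := by
  rw [root, coords, comp_ofBlocks]
  fin_cases i <;> simp [ofBlocks, rG1, rG2, rG3, map_ofNat, Eis.toComplex_ω, Eis.toComplex_qc]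

lemma root_zᵢ (i : Fin 3) : root (zᵢ i) = ![rZ1, rZ2, rZ3] i := by
  rw [root, coords, comp_ofBlocks]
  fin_cases i <;> simp [ofBlocks, rZ1, rZ2, rZ3, map_ofNat, Eis.toComplex_θ, Eis.toComplex_qc]

lemma D26_eq_range_root : D26 = Set.range root := by
  have points : pt = root ∘ ![a, cᵢ 0, cᵢ 1, cᵢ 2, eᵢ 0, eᵢ 1, eᵢ 2, aᵢ 0, aᵢ 1, aᵢ 2,
      gᵢ 0, gᵢ 1, gᵢ 2] := by
    funext k
    fin_cases k <;> simp [pt, root_a, root_aᵢ, root_cᵢ, root_eᵢ, root_gᵢ]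
  have lines : lnr = root ∘ ![f, bᵢ 0, bᵢ 1, bᵢ 2, dᵢ 0, dᵢ 1, dᵢ 2, fᵢ 0, fᵢ 1, fᵢ 2,
      zᵢ 0, zᵢ 1, zᵢ 2] := by
    funext k
    fin_cases k <;> simp [lnr, root_f, root_bᵢ, root_dᵢ, root_fᵢ, root_zᵢ]
  rw [D26, points, lines, Set.range_comp, Set.range_comp, ← Set.image_union,
    ← Set.image_univ (f := root)]
  congr 1
  refine Set.eq_univ_of_forall fun x => ?_
  simp only [Set.mem_union, Set.mem_range]
  revert x
  decide +kernel

lemma M16_eq_image_root : M16 = root '' M666 := by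
  have vertices : ![rA, rB1, rB2, rB3, rC1, rC2, rC3, rD1, rD2, rD3, rE1, rE2, rE3, rF1, rF2, rF3] =
      root ∘ ![a, bᵢ 0, bᵢ 1, bᵢ 2, cᵢ 0, cᵢ 1, cᵢ 2, dᵢ 0, dᵢ 1, dᵢ 2, eᵢ 0, eᵢ 1, eᵢ 2,
        fᵢ 0, fᵢ 1, fᵢ 2] := by
    funext k
    fin_cases k <;> simp [root_a, root_bᵢ, root_cᵢ, root_dᵢ, root_eᵢ, root_fᵢ]
  rw [M16, vertices, Set.range_comp]
  congr 1
  ext x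
  simp only [Set.mem_range, Finset.mem_coe]
  revert x
  decide +kernel

lemma rad_M16_root_of_mem_M666 {x : Vertex} (hx : x ∈ M666) : Rad M16 (root x) :=
  .base (M16_eq_image_root ▸ Set.mem_image_of_mem root hx)

end Diagram

section Dodecagons

open Vertex

lemma map_partialProd {M N F : Type*} [Monoid M] [Monoid N] [FunLike F M N] [MonoidHomClass F M N]
    (g : F) {n : ℕ} (e : Fin n → M) (k : Fin (n + 1)) :
    g (Fin.partialProd e k) = Fin.partialProd (fun j => g (e j)) k := by
  simp only [Fin.partialProd, map_list_prod, List.map_take, List.map_ofFn, Function.comp_def]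

/-- The multiple of the root of `w k` that is added when the root of `w 0` is reflected successively
in those of `w 1`, …, `w 11`. -/
def pathCoeff (w : Fin 12 → Vertex) : Fin 12 → Eis :=
  Fin.partialProd fun j : Fin 11 => step (w j.succ)

lemma pathCoeff_pow_six (w : Fin 12 → Vertex) (k : Fin 12) : pathCoeff w k ^ 6 = 1 := by
  induction k using Fin.induction with
  | zero => rw [pathCoeff, Fin.partialProd_zero, one_pow]
  | succ j ih => rw [pathCoeff, Fin.partialProd_succ, mul_pow, step_pow_six, mul_one]; exact ih

/-- An induced 12-gon of `D`, listed in cyclic order, around which the path sum closes up. -/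
structure IsClosingDodecagon (w : Fin 12 → Vertex) : Prop where
  injective : Function.Injective w
  adj_iff : ∀ j k, adj (w j) (w k) ↔ j = k + 1 ∨ k = j + 1
  sum_eq_zero : ∑ k, pathCoeff w k • coords (w k) = 0

namespace IsClosingDodecagon

variable {w : Fin 12 → Vertex} {Φ : Set V}

lemma rad_path_sum (hw : IsClosingDodecagon w) (h : ∀ k : Fin 11, Rad Φ (root (w k.castSucc))) :
    Rad Φ (∑ k : Fin 11, Eis.toComplex (pathCoeff w k.castSucc) • root (w k.castSucc)) := by
  have path := Rad.sum_partialProd_smul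
    (e := fun k : Fin 10 => Eis.toComplex (step (w k.succ.castSucc))) h
    (fun _ => herm_root_self _)
    (fun k => herm_root_of_adj ((hw.adj_iff _ _).2 (by revert k; decide)))
    (fun j k hjk => herm_root_of_not_adj (hw.injective.ne (by revert j k; decide))
      (mt (hw.adj_iff _ _).1 (by revert j k; decide)))
  simp only [pathCoeff, ← Fin.partialProd_init, map_partialProd]
  exact path

lemma path_sum_eq (hw : IsClosingDodecagon w) :
    ∑ k : Fin 11, Eis.toComplex (pathCoeff w k.castSucc) • root (w k.castSucc) =
      -(Eis.toComplex (pathCoeff w (Fin.last 11)) • root (w (Fin.last 11))) := by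
  have sum_root : ∑ k, Eis.toComplex (pathCoeff w k) • root (w k) = 0 := by
    funext n
    simpa [root] using congrArg Eis.toComplex (congrFun hw.sum_eq_zero n)
  rw [Fin.sum_univ_castSucc] at sum_root
  exact eq_neg_of_add_eq_zero_left sum_root

lemma rad_root_last (hw : IsClosingDodecagon w) (h : ∀ k : Fin 11, Rad Φ (root (w k.castSucc))) :
    Rad Φ (root (w (Fin.last 11))) := by
  set c := Eis.toComplex (pathCoeff w (Fin.last 11)) with c_def
  have hc : c ^ 6 = 1 := by rw [c_def, ← map_pow, pathCoeff_pow_six, map_one]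
  have unit : EisUnit (-c ^ 5) :=
    eisUnit_of_pow_six_eq_one (by linear_combination (c ^ 24 + c ^ 18 + c ^ 12 + c ^ 6 + 1) * hc)
  convert (hw.rad_path_sum h).unit unit using 1
  rw [hw.path_sum_eq, ← c_def, smul_neg, neg_smul, neg_neg, smul_smul, ← pow_succ, hc, one_smul]

end IsClosingDodecagon

lemma isClosingDodecagon_aᵢ (i : Fin 3) : IsClosingDodecagon
    ![fᵢ (i + 1), eᵢ (i + 1), dᵢ (i + 1), cᵢ (i + 1), bᵢ (i + 1), a,
      bᵢ (i + 2), cᵢ (i + 2), dᵢ (i + 2), eᵢ (i + 2), fᵢ (i + 2), aᵢ i] := by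
  constructor <;> revert i <;> decide +kernel

lemma isClosingDodecagon_zᵢ (i : Fin 3) : IsClosingDodecagon
    ![cᵢ (i + 1), dᵢ (i + 1), eᵢ (i + 1), fᵢ (i + 1), aᵢ (i + 2), fᵢ i,
      aᵢ (i + 1), fᵢ (i + 2), eᵢ (i + 2), dᵢ (i + 2), cᵢ (i + 2), zᵢ i] := by
  constructor <;> revert i <;> decide +kernel

lemma isClosingDodecagon_gᵢ (i : Fin 3) : IsClosingDodecagon
    ![bᵢ i, a, bᵢ (i + 2), cᵢ (i + 2), zᵢ (i + 1), aᵢ (i + 1),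
      fᵢ (i + 2), eᵢ (i + 2), zᵢ (i + 2), cᵢ (i + 1), dᵢ (i + 1), gᵢ i] := by
  constructor <;> revert i <;> decide +kernel

lemma isClosingDodecagon_f : IsClosingDodecagon
    ![eᵢ 0, dᵢ 0, gᵢ 1, dᵢ 2, cᵢ 2, bᵢ 2, aᵢ 2, zᵢ 2, cᵢ 1, dᵢ 1, eᵢ 1, f] := by
  constructor <;> decide +kernel

lemma rad_M16_root_aᵢ (i : Fin 3) : Rad M16 (root (aᵢ i)) :=
  (isClosingDodecagon_aᵢ i).rad_root_last <| by
    simp [Fin.forall_fin_succ, rad_M16_root_of_mem_M666, mem_M666]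

lemma rad_M16_root_zᵢ (i : Fin 3) : Rad M16 (root (zᵢ i)) :=
  (isClosingDodecagon_zᵢ i).rad_root_last <| by
    simp [Fin.forall_fin_succ, rad_M16_root_of_mem_M666, mem_M666, rad_M16_root_aᵢ]

lemma rad_M16_root_gᵢ (i : Fin 3) : Rad M16 (root (gᵢ i)) :=
  (isClosingDodecagon_gᵢ i).rad_root_last <| by
    simp [Fin.forall_fin_succ, rad_M16_root_of_mem_M666, mem_M666, rad_M16_root_aᵢ, rad_M16_root_zᵢ]

lemma rad_M16_root_f : Rad M16 (root f) :=
  isClosingDodecagon_f.rad_root_last <| by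
    simp [Fin.forall_fin_succ, rad_M16_root_of_mem_M666, mem_M666, rad_M16_root_aᵢ, rad_M16_root_zᵢ,
      rad_M16_root_gᵢ]

lemma rad_M16_root : ∀ x : Vertex, Rad M16 (root x)
  | f => rad_M16_root_f
  | aᵢ i => rad_M16_root_aᵢ i
  | gᵢ i => rad_M16_root_gᵢ i
  | zᵢ i => rad_M16_root_zᵢ i
  | a | bᵢ _ | cᵢ _ | dᵢ _ | eᵢ _ | fᵢ _ => rad_M16_root_of_mem_M666 (by simp [mem_M666])

end Dodecagons

/-- `rad(M₆₆₆) = rad(D)`, and consequently the group `R₁` generated by the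
`ω`-reflections in the 16 roots of the `M₆₆₆` diagram equals the group `R₂`
generated by the `ω`-reflections in the 26 roots of `D`. -/
theorem stmt3 :
    (∀ v : V, Rad M16 v ↔ Rad D26 v) ∧
    Subgroup.closure (ReflAutos M16) = Subgroup.closure (ReflAutos D26) := by
  have rad_D26 : ∀ r ∈ D26, Rad M16 r := by
    rw [D26_eq_range_root]
    exact Set.forall_mem_range.2 rad_M16_root
  have M16_subset_D26 : M16 ⊆ D26 := by
    rw [M16_eq_image_root, D26_eq_range_root]
    exact Set.image_subset_range _ _
  have reflEquiv_mem : ∀ r ∈ M16, reflEquiv r ∈ AutL := by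
    rw [M16_eq_image_root]
    exact Set.forall_mem_image.2 fun x _ => Vertex.reflEquiv_root_mem_AutL x
  refine ⟨fun v => ⟨Rad.of_forall_mem fun r hr => .base (M16_subset_D26 hr),
    Rad.of_forall_mem rad_D26⟩, le_antisymm ?_ ?_⟩
  · exact Subgroup.closure_mono (ReflAutos_mono M16_subset_D26)
  · exact closure_ReflAutos_le reflEquiv_mem rad_D26

end Bimonster
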